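/- arXiv:2106.05149 — 14 statements merged into one kernel-verified Lean document; each statement's English description precedes it below -/
import Mathlib

section
/- Let B be a left brace and define r : B×B → B×B by r(a,b) = (λ_a(b), λ_{λ_a(b)}^{-1}(a)), where λ_a(b) = a∘b − a. Then (B,r) is a non-degenerate involutive set-theoretic solution of the Yang–Baxter equation: r₁r₂r₁ = r₂r₁r₂, r² = id, and writing r(a,b) = (λ_a(b), τ_b(a)), all the maps λ_a and τ_a are bijections of B. -/
/-- A left brace: `(B,+)` is an abelian group, `(B,∘)` is a group, and
`a∘(b+c) + a = a∘b + a∘c`. -/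
class LeftBrace (B : Type*) extends AddCommGroup B where
  circ : B → B → B
  circ_assoc : ∀ a b c : B, circ (circ a b) c = circ a (circ b c)
  cone : B
  circ_cone : ∀ a : B, circ a cone = a
  cone_circ : ∀ a : B, circ cone a = a
  cinv : B → B
  circ_cinv : ∀ a : B, circ a (cinv a) = cone
  cinv_circ : ∀ a : B, circ (cinv a) a = cone
  left_brace : ∀ a b c : B, circ a (b + c) + a = circ a b + circ a c

/-- The lambda map of a left brace: `λ_a(b) = a∘b − a`. -/
def lam {B : Type*} [LeftBrace B] (a b : B) : B := LeftBrace.circ a b - a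

/-- `τ_b(a) = λ_{λ_a(b)}⁻¹(a)`. -/
noncomputable def tauB {B : Type*} [LeftBrace B] (b a : B) : B :=
  Function.invFun (lam (lam a b)) a

/-- The map `r(a,b) = (λ_a(b), λ_{λ_a(b)}⁻¹(a))` associated to a left brace. -/
noncomputable def rB {B : Type*} [LeftBrace B] : B × B → B × B :=
  fun p => (lam p.1 p.2, tauB p.2 p.1)

/-- `r₁ = r × id` on `B × B × B`. -/
noncomputable def rB1 {B : Type*} [LeftBrace B] : B × B × B → B × B × B :=
  fun t => ((rB (t.1, t.2.1)).1, (rB (t.1, t.2.1)).2, t.2.2)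

/-- `r₂ = id × r` on `B × B × B`. -/
noncomputable def rB2 {B : Type*} [LeftBrace B] : B × B × B → B × B × B :=
  fun t => (t.1, rB t.2)

section helpers
open LeftBrace
variable {B : Type*} [LeftBrace B]

theorem circ_cancel {a b c : B} (h : circ a b = circ a c) : b = c := by
  have := congrArg (circ (cinv a)) h
  rwa [← circ_assoc, ← circ_assoc, cinv_circ, cone_circ, cone_circ] at this

theorem circ_zero' (a : B) : circ a 0 = a := by
  have h := left_brace a 0 0
  rw [add_zero] at h
  exact (add_left_cancel h).symm

theorem cone_eq : (cone : B) = 0 := by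
  rw [← cone_circ (0 : B), circ_zero']

theorem circ_eq (a b : B) : circ a b = a + lam a b := by
  unfold lam; abel

theorem lam_add (a b c : B) : lam a (b + c) = lam a b + lam a c := by
  have h := eq_sub_of_add_eq (left_brace a b c)
  unfold lam
  rw [h]; abel

theorem lam_zero (a : B) : lam a 0 = 0 := by
  unfold lam; rw [circ_zero', sub_self]

theorem lam_cone (b : B) : lam cone b = b := by
  unfold lam; rw [cone_circ, cone_eq, sub_zero]

theorem lam_circ (a b c : B) : lam (circ a b) c = lam a (lam b c) := by
  have h := circ_assoc a b c
  rw [circ_eq (circ a b) c, circ_eq a (circ b c), circ_eq b c, lam_add, circ_eq a b,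
    ← add_assoc] at h
  rw [circ_eq a b]
  exact add_left_cancel h

theorem lam_bij (a : B) : Function.Bijective (lam a) := by
  refine Function.bijective_iff_has_inverse.2 ⟨lam (cinv a), fun x => ?_, fun x => ?_⟩
  · rw [← lam_circ, cinv_circ, lam_cone]
  · rw [← lam_circ, circ_cinv, lam_cone]

theorem lam_tau (a b : B) : lam (lam a b) (tauB b a) = a :=
  Function.invFun_eq ((lam_bij (lam a b)).2 a)

theorem circ_tau (a b : B) : circ (lam a b) (tauB b a) = circ a b := by
  rw [circ_eq, lam_tau, circ_eq a b, add_comm]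

theorem tau_circ (a b c : B) : tauB (circ b c) a = tauB c (tauB b a) := by
  have h : lam a (circ b c) = circ (lam a b) (lam (tauB b a) c) := by
    rw [circ_eq b c, lam_add, ← lam_circ, ← circ_tau a b, lam_circ, circ_eq (lam a b)]
  apply circ_cancel (a := lam a (circ b c))
  rw [circ_tau, h, circ_assoc, circ_tau, ← circ_assoc (lam a b), circ_tau, circ_assoc]

theorem tau_cone (a : B) : tauB cone a = a := by
  have h := circ_tau a (cone : B)
  rwa [circ_cone, cone_eq, lam_zero, ← cone_eq, cone_circ] at h

theorem tau_bij (b : B) : Function.Bijective (fun a : B => tauB b a) := by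
  refine Function.bijective_iff_has_inverse.2 ⟨tauB (cinv b), fun x => ?_, fun x => ?_⟩
  · change tauB (cinv b) (tauB b x) = x
    rw [← tau_circ, circ_cinv, tau_cone]
  · change tauB b (tauB (cinv b) x) = x
    rw [← tau_circ, cinv_circ, tau_cone]

theorem circ_cancel_right {a b c : B} (h : circ a c = circ b c) : a = b := by
  have := congrArg (fun x => circ x (cinv c)) h
  simpa only [circ_assoc, circ_cinv, circ_cone] using this

theorem ybe (a b c : B) : rB1 (rB2 (rB1 (a, b, c))) = rB2 (rB1 (rB2 (a, b, c))) := by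
  simp only [rB1, rB2, rB]
  have h1 : lam (lam a b) (lam (tauB b a) c) = lam a (lam b c) := by
    rw [← lam_circ, circ_tau, lam_circ]
  have h3 : tauB c (tauB b a) = tauB (tauB c b) (tauB (lam b c) a) := by
    rw [← tau_circ, ← tau_circ, circ_tau]
  have h2 : tauB (lam (tauB b a) c) (lam a b) = lam (tauB (lam b c) a) (tauB c b) := by
    apply circ_cancel (a := lam a (lam b c))
    apply circ_cancel_right (c := tauB c (tauB b a))
    conv_lhs => rw [← h1, circ_tau, circ_assoc, circ_tau, ← circ_assoc, circ_tau]
    rw [h3, circ_assoc (lam a (lam b c)), circ_tau, ← circ_assoc (lam a (lam b c)), circ_tau,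
      circ_assoc a (lam b c), circ_tau, circ_assoc]
  rw [h1, h2, h3]

theorem rB_inv (a b : B) : rB (rB (a, b)) = (a, b) := by
  simp only [rB]
  rw [lam_tau]
  congr 1
  apply circ_cancel (a := a)
  have h := circ_tau (lam a b) (tauB b a)
  rwa [lam_tau, circ_tau] at h

end helpers

/-- A left brace gives a non-degenerate involutive set-theoretic solution of
the Yang–Baxter equation. -/
theorem stmt_4 {B : Type*} [LeftBrace B] :
    rB1 ∘ rB2 ∘ rB1 = (rB2 ∘ rB1 ∘ rB2 : B × B × B → B × B × B) ∧
    rB ∘ rB = (id : B × B → B × B) ∧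
    (∀ a : B, Function.Bijective (lam a)) ∧
    (∀ b : B, Function.Bijective (fun a : B => tauB b a)) := by
  exact ⟨funext fun ⟨a, b, c⟩ => ybe a b c, funext fun ⟨a, b⟩ => rB_inv a b, lam_bij, tau_bij⟩
end

section
/- If (R,+,*) is a Jacobson radical ring, then (R,+,∘) with the adjoint multiplication a∘b = a + b + a*b is a two-sided brace (both a left and a right brace). Conversely, if (B,+,∘) is a two-sided brace, then (B,+,*) with the ring multiplication a*b = a∘b − a − b is a Jacobson radical ring. -/
/-- A two-sided brace: a left brace which is also a right brace. -/
class TwoSidedBrace (B : Type*) extends LeftBrace B where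
  right_brace : ∀ a b c : B, circ (a + b) c + c = circ a c + circ b c

/-- The adjoint multiplication `a∘b = a + b + a*b` on a ring. -/
def adjMul {R : Type*} [NonUnitalRing R] (a b : R) : R := a + b + a * b

/-- The ring multiplication `a*b = a∘b − a − b` on a brace. -/
def starB {B : Type*} [LeftBrace B] (a b : B) : B :=
  LeftBrace.circ a b - a - b

/-- A Jacobson radical ring is a two-sided brace under the adjoint
multiplication; conversely, a two-sided brace is a Jacobson radical ring
under the ring multiplication. -/
theorem stmt_5 :
    (∀ (R : Type) [inst : NonUnitalRing R],
        (∀ a : R, ∃ b : R, a + b + a * b = 0) →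
        ((∀ a b c : R, adjMul (adjMul a b) c = adjMul a (adjMul b c)) ∧
         (∀ a : R, adjMul a 0 = a ∧ adjMul 0 a = a) ∧
         (∀ a : R, ∃ b : R, adjMul a b = 0 ∧ adjMul b a = 0) ∧
         (∀ a b c : R, adjMul a (b + c) + a = adjMul a b + adjMul a c) ∧
         (∀ a b c : R, adjMul (a + b) c + c = adjMul a c + adjMul b c))) ∧
    (∀ (B : Type) [inst : TwoSidedBrace B],
        (∀ a b c : B, starB (starB a b) c = starB a (starB b c)) ∧
        (∀ a b c : B, starB a (b + c) = starB a b + starB a c) ∧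
        (∀ a b c : B, starB (a + b) c = starB a c + starB b c) ∧
        (∀ a : B, ∃ b : B, a + b + starB a b = 0)) := by
  refine ⟨?_, ?_⟩
  · intro R _ h
    have hassoc : ∀ a b c : R, adjMul (adjMul a b) c = adjMul a (adjMul b c) := by
      intro a b c
      simp only [adjMul, mul_add, add_mul, mul_assoc]
      abel
    have h0 : ∀ a : R, adjMul a 0 = a ∧ adjMul 0 a = a := by
      intro a
      simp [adjMul]
    refine ⟨hassoc, h0, ?_, ?_, ?_⟩
    · intro a
      obtain ⟨b, hb⟩ := h a
      obtain ⟨c, hc⟩ := h b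
      change adjMul a b = 0 at hb
      change adjMul b c = 0 at hc
      have hac : a = c := by
        have e := hassoc a b c
        rw [hb, hc, (h0 c).2, (h0 a).1] at e
        exact e.symm
      exact ⟨b, hb, by rw [hac]; exact hc⟩
    · intro a b c
      simp only [adjMul, mul_add]
      abel
    · intro a b c
      simp only [adjMul, add_mul]
      abel
  · intro B _
    have hl : ∀ a b c : B, starB a (b + c) = starB a b + starB a c := by
      intro a b c
      have e := eq_sub_of_add_eq (LeftBrace.left_brace a b c)
      simp only [starB, e]
      abel
    have hr : ∀ a b c : B, starB (a + b) c = starB a c + starB b c := by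
      intro a b c
      have e := eq_sub_of_add_eq (TwoSidedBrace.right_brace a b c)
      simp only [starB, e]
      abel
    have hc : ∀ a b : B, LeftBrace.circ a b = a + b + starB a b := by
      intro a b
      simp only [starB]
      abel
    have h1 : (LeftBrace.cone : B) = 0 := by
      have e := LeftBrace.left_brace (LeftBrace.cone : B) 0 0
      simpa [LeftBrace.cone_circ] using e
    refine ⟨?_, hl, hr, ?_⟩
    · intro a b c
      have e := LeftBrace.circ_assoc a b c
      simp only [hc, hl, hr] at e
      have e2 := sub_eq_zero.mpr e
      rw [← sub_eq_zero, ← e2]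
      abel
    · intro a
      exact ⟨LeftBrace.cinv a, by rw [← hc, LeftBrace.circ_cinv, h1]⟩
end

section
/- Let (X,·) be a cycle set and define R : X×X → X×X by R(x,y) = (x^y, x^y · y), where x^y = σ_y^{-1}(x). Then (X,R) is a left non-degenerate unitary set-theoretic solution of the quantum Yang–Baxter equation. -/
/-- The map `R(x,y) = (x^y, x^y · y)` associated to a cycle set whose left
multiplications are the bijections `σ x`, where `x^y = σ_y⁻¹(x)`. -/
def Rmap {X : Type*} (σ : X → X ≃ X) : X × X → X × X :=
  fun p => ((σ p.2).symm p.1, σ ((σ p.2).symm p.1) p.2)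

/-- `R₁₂` acting on the first two coordinates of `X³`. -/
def R12g {X : Type*} (Rm : X × X → X × X) : X × X × X → X × X × X :=
  fun t => ((Rm (t.1, t.2.1)).1, (Rm (t.1, t.2.1)).2, t.2.2)

/-- `R₁₃` acting on the first and third coordinates of `X³`. -/
def R13g {X : Type*} (Rm : X × X → X × X) : X × X × X → X × X × X :=
  fun t => ((Rm (t.1, t.2.2)).1, t.2.1, (Rm (t.1, t.2.2)).2)

/-- `R₂₃` acting on the last two coordinates of `X³`. -/
def R23g {X : Type*} (Rm : X × X → X × X) : X × X × X → X × X × X :=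
  fun t => (t.1, Rm t.2)

/-- A cycle set `(X,·)` (with bijective left multiplications `σ x` and
`(x·y)·(x·z) = (y·x)·(y·z)`) gives rise, via `R(x,y) = (x^y, x^y·y)`, to a
left non-degenerate unitary set-theoretic solution of the QYBE. -/
theorem stmt_6 {X : Type*} (σ : X → X ≃ X)
    (hcyc : ∀ x y z : X, σ (σ x y) (σ x z) = σ (σ y x) (σ y z)) :
    R12g (Rmap σ) ∘ R13g (Rmap σ) ∘ R23g (Rmap σ) =
      R23g (Rmap σ) ∘ R13g (Rmap σ) ∘ R12g (Rmap σ) ∧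
    (∀ y : X, Function.Bijective fun x : X => (Rmap σ (x, y)).1) ∧
    (Prod.swap ∘ Rmap σ) ∘ (Prod.swap ∘ Rmap σ) = (id : X × X → X × X) := by
  have hR : ∀ x y : X, Rmap σ (σ y x, y) = (x, σ x y) := by
    intro x y
    simp [Rmap]
  refine ⟨?_, ?_, ?_⟩
  · funext t
    obtain ⟨x, y, z⟩ := t
    obtain ⟨b, rfl⟩ := (σ z).surjective y
    obtain ⟨a', rfl⟩ := (σ (σ z b)).surjective x
    obtain ⟨a, rfl⟩ := (σ z).surjective a'
    have hL : (R12g (Rmap σ) ∘ R13g (Rmap σ) ∘ R23g (Rmap σ))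
        (σ (σ z b) (σ z a), σ z b, z) = (a, σ a b, σ (σ b a) (σ b z)) := by
      simp only [Function.comp_apply, R23g, R13g, R12g, hR]
      rw [hcyc z b a]
      simp only [hR]
    have hL' : (R23g (Rmap σ) ∘ R13g (Rmap σ) ∘ R12g (Rmap σ))
        (σ (σ z b) (σ z a), σ z b, z) = (a, σ a b, σ (σ a b) (σ a z)) := by
      simp only [Function.comp_apply, R23g, R13g, R12g, hR]
      rw [hcyc z a b]
      simp only [hR]
    rw [hL, hL', hcyc a b z]
  · intro y
    exact (σ y).symm.bijective
  · funext t
    obtain ⟨x, y⟩ := t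
    obtain ⟨a, rfl⟩ := (σ y).surjective x
    simp only [Function.comp_apply, hR, Prod.swap_prod_mk, id]
end

section
/- Let (X,R) with R(x,y) = (x^y, ˣy) be a left non-degenerate unitary set-theoretic solution of the quantum Yang–Baxter equation. For each x ∈ X let σ_x : X → X be the inverse of the bijection z ↦ z^x, and define x·y := σ_x(y). Then (X,·) is a cycle set, and moreover ˣy = x^y · y for all x, y ∈ X. -/
/-- The map `R(x,y) = (x^y, ˣy)` built from the two families
`pow x y = x^y` and `act x y = ˣy`. -/
def Rof {X : Type*} (pow act : X → X → X) : X × X → X × X :=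
  fun p => (pow p.1 p.2, act p.1 p.2)

/-- A left non-degenerate unitary solution `R(x,y) = (x^y, ˣy)` of the QYBE
yields a cycle set via `x·y := σ_x(y)`, where `σ_x` is the inverse of the
bijection `z ↦ z^x`; moreover `ˣy = x^y · y`. -/
theorem stmt_7 {X : Type*} (pow act : X → X → X)
    (hndg : ∀ y : X, Function.Bijective fun x : X => pow x y)
    (hqybe : R12g (Rof pow act) ∘ R13g (Rof pow act) ∘ R23g (Rof pow act) =
      R23g (Rof pow act) ∘ R13g (Rof pow act) ∘ R12g (Rof pow act))
    (hunit : (Prod.swap ∘ Rof pow act) ∘ (Prod.swap ∘ Rof pow act) =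
      (id : X × X → X × X))
    (σ : X → X → X)
    (hσ : ∀ x y : X, pow (σ x y) x = y ∧ σ x (pow y x) = y) :
    (∀ x : X, Function.Bijective (σ x)) ∧
    (∀ x y z : X, σ (σ x y) (σ x z) = σ (σ y x) (σ y z)) ∧
    (∀ x y : X, act x y = σ (pow x y) y) := by
  have hact : ∀ x y : X, act x y = σ (pow x y) y := by
    intro x y
    have h : pow (act x y) (pow x y) = y := congrArg Prod.snd (congrFun hunit (x, y))
    have h2 := (hσ (pow x y) (act x y)).2
    rw [h] at h2
    exact h2.symm
  have hq : ∀ x y z : X, pow (pow x (act y z)) (pow y z) = pow (pow x y) z := fun x y z =>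
    congrArg Prod.fst (congrFun hqybe (x, y, z))
  refine ⟨fun x => ?_, fun x y z => ?_, hact⟩
  · exact Function.bijective_iff_has_inverse.mpr
      ⟨fun y => pow y x, fun y => (hσ x y).1, fun y => (hσ x y).2⟩
  · have h1 := hq (σ (σ x y) (σ x z)) (σ y x) y
    rw [hact, (hσ y x).1, (hσ (σ x y) (σ x z)).1, (hσ x z).1] at h1
    have h2 : σ y z = pow (σ (σ x y) (σ x z)) (σ y x) := by
      conv_lhs => rw [h1]
      exact (hσ _ _).2
    rw [h2, (hσ _ _).2]
end

section
/- Let X be a set and r : X×X → X×X be given by r(x,y) = (λ_x(y), τ_y(x)). Then (X,r) is a set-theoretic solution of the Yang–Baxter equation if and only if the following three identities hold for all x, y, z ∈ X: (i) τ_z∘τ_y = τ_{τ_z(y)}∘τ_{λ_y(z)} applied appropriately, i.e. τ_z(τ_y(x)) = τ_{τ_z(y)}(τ_{λ_y(z)}(x)); (ii) λ_{τ_{λ_y(z)}(x)}(τ_z(y)) = τ_{λ_{τ_y(x)}(z)}(λ_x(y)); (iii) λ_x(λ_y(z)) = λ_{λ_x(y)}(λ_{τ_y(x)}(z)). Moreover,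 if r is involutive (r² = id) and non-degenerate (all λ_x and τ_x bijective), then the validity of any one of the identities (i), (ii), (iii) for all x, y, z implies the other two, and hence implies that (X,r) is a solution of the YBE. -/
/-- `r₁ = r × id` on `X³`. -/
def r1g {X : Type*} (r : X × X → X × X) : X × X × X → X × X × X :=
  fun t => ((r (t.1, t.2.1)).1, (r (t.1, t.2.1)).2, t.2.2)

/-- `r₂ = id × r` on `X³`. -/
def r2g {X : Type*} (r : X × X → X × X) : X × X × X → X × X × X :=
  fun t => (t.1, r t.2)

/-- The map `r(x,y) = (λ_x(y), τ_y(x))`. -/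
def rOf {X : Type*} (lam tau : X → X → X) : X × X → X × X :=
  fun p => (lam p.1 p.2, tau p.2 p.1)

/-- Identity (i): `τ_z(τ_y(x)) = τ_{τ_z(y)}(τ_{λ_y(z)}(x))`. -/
def condI {X : Type*} (lam tau : X → X → X) : Prop :=
  ∀ x y z : X, tau z (tau y x) = tau (tau z y) (tau (lam y z) x)

/-- Identity (ii): `λ_{τ_{λ_y(z)}(x)}(τ_z(y)) = τ_{λ_{τ_y(x)}(z)}(λ_x(y))`. -/
def condII {X : Type*} (lam tau : X → X → X) : Prop :=
  ∀ x y z : X, lam (tau (lam y z) x) (tau z y) = tau (lam (tau y x) z) (lam x y)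

/-- Identity (iii): `λ_x(λ_y(z)) = λ_{λ_x(y)}(λ_{τ_y(x)}(z))`. -/
def condIII {X : Type*} (lam tau : X → X → X) : Prop :=
  ∀ x y z : X, lam x (lam y z) = lam (lam x y) (lam (tau y x) z)

theorem aux_ybe {X : Type*} (lam tau : X → X → X) :
    (r1g (rOf lam tau) ∘ r2g (rOf lam tau) ∘ r1g (rOf lam tau) =
        r2g (rOf lam tau) ∘ r1g (rOf lam tau) ∘ r2g (rOf lam tau)) ↔
      (condI lam tau ∧ condII lam tau ∧ condIII lam tau) := by
  constructor
  · intro h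
    have h' : ∀ x y z : X, _ := fun x y z => congrFun h (x, y, z)
    simp only [r1g, r2g, rOf, Function.comp, Prod.mk.injEq] at h'
    exact ⟨fun x y z => (h' x y z).2.2, fun x y z => (h' x y z).2.1.symm,
      fun x y z => (h' x y z).1.symm⟩
  · rintro ⟨h1, h2, h3⟩
    funext ⟨x, y, z⟩
    simp only [r1g, r2g, rOf, Function.comp, Prod.mk.injEq]
    exact ⟨(h3 x y z).symm, (h2 x y z).symm, h1 x y z⟩

theorem aux_III_II {X : Type*} (lam tau : X → X → X)
    (hl : ∀ x y, lam (lam x y) (tau y x) = x)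
    (il : ∀ x, Function.Injective (lam x)) (h : condIII lam tau) : condII lam tau := by
  intro x y z
  apply il (lam x (lam y z))
  have e := h x (lam y z) (tau z y)
  rw [hl] at e
  rw [← e, h x y z, hl]

theorem aux_III_I {X : Type*} (lam tau : X → X → X)
    (hl : ∀ x y, lam (lam x y) (tau y x) = x)
    (ht : ∀ x y, tau (tau y x) (lam x y) = y)
    (il : ∀ x, Function.Injective (lam x)) (h : condIII lam tau) : condI lam tau := by
  have h2 := aux_III_II lam tau hl il h
  intro x y z
  apply il (lam (tau (lam y z) x) (tau z y))
  apply il (lam x (lam y z))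
  rw [hl, hl, h2 x y z, h x y z, h (lam (lam x y) _), hl, ht, hl, hl]

theorem aux_II_III {X : Type*} (lam tau : X → X → X)
    (hl : ∀ x y, lam (lam x y) (tau y x) = x)
    (ht : ∀ x y, tau (tau y x) (lam x y) = y)
    (it : ∀ x, Function.Injective (tau x)) (h : condII lam tau) : condIII lam tau := by
  intro x y z
  apply it (lam (tau (lam y z) x) (tau z y))
  have e := h x (lam y z) (tau z y)
  rw [hl, ht] at e
  rw [← e, h x y z, ht]

/-- `(X,r)` with `r(x,y) = (λ_x(y), τ_y(x))` is a solution of the YBE iff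
identities (i), (ii), (iii) hold; if moreover `r` is involutive and
non-degenerate, then any one of the three identities implies the other two
and hence that `(X,r)` is a solution of the YBE. -/
theorem stmt_8 {X : Type*} (lam tau : X → X → X) :
    ((r1g (rOf lam tau) ∘ r2g (rOf lam tau) ∘ r1g (rOf lam tau) =
        r2g (rOf lam tau) ∘ r1g (rOf lam tau) ∘ r2g (rOf lam tau)) ↔
      (condI lam tau ∧ condII lam tau ∧ condIII lam tau)) ∧
    ((rOf lam tau ∘ rOf lam tau = id ∧
        (∀ x : X, Function.Bijective (lam x)) ∧
        (∀ x : X, Function.Bijective (tau x))) →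
      ((condI lam tau →
          condII lam tau ∧ condIII lam tau ∧
          r1g (rOf lam tau) ∘ r2g (rOf lam tau) ∘ r1g (rOf lam tau) =
            r2g (rOf lam tau) ∘ r1g (rOf lam tau) ∘ r2g (rOf lam tau)) ∧
       (condII lam tau →
          condI lam tau ∧ condIII lam tau ∧
          r1g (rOf lam tau) ∘ r2g (rOf lam tau) ∘ r1g (rOf lam tau) =
            r2g (rOf lam tau) ∘ r1g (rOf lam tau) ∘ r2g (rOf lam tau)) ∧
       (condIII lam tau →
          condI lam tau ∧ condII lam tau ∧
          r1g (rOf lam tau) ∘ r2g (rOf lam tau) ∘ r1g (rOf lam tau) =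
            r2g (rOf lam tau) ∘ r1g (rOf lam tau) ∘ r2g (rOf lam tau)))) := by
  refine ⟨aux_ybe lam tau, ?_⟩
  rintro ⟨hr, bl, bt⟩
  have hr' : ∀ x y : X, _ := fun x y => congrFun hr (x, y)
  simp only [rOf, Function.comp, id, Prod.mk.injEq] at hr'
  have hl := fun x y => (hr' x y).1
  have ht := fun x y => (hr' x y).2
  have il := fun x => (bl x).injective
  have it := fun x => (bt x).injective
  have h32 := aux_III_II lam tau hl il
  have h31 := aux_III_I lam tau hl ht il
  have h23 := aux_II_III lam tau hl ht it
  have h12 : condI lam tau → condII lam tau := fun h x y z =>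
    (aux_III_II tau lam (fun x y => ht y x) it (fun x y z => h z y x) z y x).symm
  rw [aux_ybe]
  tauto
end

section
/- Let (X,·) be a cycle set with x^y = σ_y^{-1}(x) and associated map R(x,y) = (x^y, x^y·y). The following are equivalent: (1) X is a non-degenerate cycle set, i.e., the map x ↦ x·x is a bijection; (2) (X,R) is a non-degenerate solution of the QYBE, i.e., for each x the map y ↦ x^y·y is a bijection of X; (3) there exists a binary operation ⊙ on X dual to ·, i.e., satisfying (x·y) ⊙ (y·x) = x and (x⊙y) · (y⊙x) = x for all x, y ∈ X. -/
/-- For a cycle set `(X,·)` with left multiplications `σ x` and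
`x^y = σ_y⁻¹(x)`, the following are equivalent:
(1) `x ↦ x·x` is a bijection (the cycle set is non-degenerate);
(2) for each `x`, the map `y ↦ ˣy = x^y·y` is a bijection (the associated
QYBE solution is non-degenerate);
(3) there exists a dual operation `⊙` with `(x·y) ⊙ (y·x) = x` and
`(x⊙y) · (y⊙x) = x`. -/
theorem stmt_9 {X : Type*} (σ : X → X ≃ X)
    (hcyc : ∀ x y z : X, σ (σ x y) (σ x z) = σ (σ y x) (σ y z)) :
    (Function.Bijective (fun x : X => σ x x) ↔
      ∀ x : X, Function.Bijective fun y : X => σ ((σ y).symm x) y) ∧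
    (Function.Bijective (fun x : X => σ x x) ↔
      ∃ od : X → X → X, ∀ x y : X,
        od (σ x y) (σ y x) = x ∧ σ (od x y) (od y x) = x) := by
  have h12 : Function.Bijective (fun x : X => σ x x) →
      ∀ a b : X, ∃ x y : X, σ x y = a ∧ σ y x = b ∧
        ∀ x' y' : X, σ x' y' = a → σ y' x' = b → x' = x ∧ y' = y := by
    intro hT a b
    obtain ⟨y, hy⟩ := hT.2 ((σ b).symm (σ a a))
    have hy1 : σ b (σ y y) = σ a a := by
      have : σ y y = (σ b).symm (σ a a) := hy
      rw [this, Equiv.apply_symm_apply]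
    have hx : σ y ((σ y).symm b) = b := Equiv.apply_symm_apply _ _
    refine ⟨(σ y).symm b, y, ?_, hx, ?_⟩
    · apply hT.1
      have h := hcyc ((σ y).symm b) y y
      rw [hx, hy1] at h
      exact h
    · intro x' y' h1 h2
      have h := hcyc x' y' y'
      rw [h1, h2, ← hy1] at h
      have hyy : y' = y := hT.1 ((σ b).injective h.symm)
      subst hyy
      exact ⟨(σ y').injective (h2.trans hx.symm), rfl⟩
  have h21 : (∀ a b : X, ∃ x y : X, σ x y = a ∧ σ y x = b ∧
        ∀ x' y' : X, σ x' y' = a → σ y' x' = b → x' = x ∧ y' = y) →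
      Function.Bijective (fun x : X => σ x x) := by
    intro h
    constructor
    · intro x y hxy
      have hxy' : σ x x = σ y y := hxy
      obtain ⟨u, v, _, _, hu⟩ := h (σ x x) (σ x x)
      exact (hu x x rfl rfl).1.trans (hu y y hxy'.symm hxy'.symm).1.symm
    · intro a
      obtain ⟨u, v, h1, h2, hu⟩ := h a a
      have : v = u := (hu v u h2 h1).1
      subst this
      exact ⟨v, h1⟩
  refine ⟨⟨fun hT x => ?_, fun h => h21 fun a b => ?_⟩,
    ⟨fun hT => ?_, fun ⟨od, h⟩ => h21 fun a b => ?_⟩⟩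
  · constructor
    · intro y y' hyy
      obtain ⟨u, v, _, _, hu⟩ := h12 hT x (σ ((σ y).symm x) y)
      exact (hu y _ (Equiv.apply_symm_apply _ _) rfl).1.trans
        (hu y' _ (Equiv.apply_symm_apply _ _) hyy.symm).1.symm
    · intro b
      obtain ⟨u, v, h1, h2, _⟩ := h12 hT x b
      refine ⟨u, ?_⟩
      change σ ((σ u).symm x) u = b
      rw [← h1, Equiv.symm_apply_apply, h2]
  · obtain ⟨y, hy⟩ := (h a).2 b
    refine ⟨y, (σ y).symm a, Equiv.apply_symm_apply _ _, hy, ?_⟩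
    intro x' y' h1 h2
    have e : (σ x').symm a = y' := by rw [← h1, Equiv.symm_apply_apply]
    have hx : x' = y := by
      apply (h a).1
      change σ ((σ x').symm a) x' = _
      rw [e, h2]
      exact hy.symm
    subst hx
    exact ⟨rfl, e.symm⟩
  · choose f g hf hg hu using h12 hT
    refine ⟨f, fun x y => ⟨(hu _ _ x y rfl rfl).1.symm, ?_⟩⟩
    have e : g x y = f y x := (hu y x (g x y) (f x y) (hg x y) (hf x y)).1
    rw [← e]
    exact hf x y
  · refine ⟨od a b, od b a, (h a b).2, (h b a).2, ?_⟩
    intro x' y' h1 h2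
    rw [← h1, ← h2]
    exact ⟨(h x' y').1.symm, (h y' x').1.symm⟩
end

section
/- Let (X,·) be a non-degenerate cycle set and let ⊙ be a dual operation to ·, i.e., (x·y) ⊙ (y·x) = x and (x⊙y) · (y⊙x) = x for all x, y ∈ X. Then (X,⊙) is itself a non-degenerate cycle set: every left multiplication x ⊙ − is a bijection, (x⊙y)⊙(x⊙z) = (y⊙x)⊙(y⊙z) for all x, y, z, and the map x ↦ x⊙x is a bijection. -/
/-- If `(X,·)` is a non-degenerate cycle set (left multiplications `σ x`
bijective, cycle identity, and `x ↦ x·x` bijective) and `⊙` is a dual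
operation to `·`, then `(X,⊙)` is itself a non-degenerate cycle set. -/
theorem stmt_10 {X : Type*} (σ : X → X ≃ X)
    (hcyc : ∀ x y z : X, σ (σ x y) (σ x z) = σ (σ y x) (σ y z))
    (hnd : Function.Bijective (fun x : X => σ x x))
    (od : X → X → X)
    (hdual : ∀ x y : X, od (σ x y) (σ y x) = x ∧ σ (od x y) (od y x) = x) :
    (∀ x : X, Function.Bijective (od x)) ∧
    (∀ x y z : X, od (od x y) (od x z) = od (od y x) (od y z)) ∧
    Function.Bijective (fun x : X => od x x) := by
  have h1 : ∀ x y, od (σ x y) (σ y x) = x := fun x y => (hdual x y).1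
  have h2 : ∀ x y, σ (od x y) (od y x) = x := fun x y => (hdual x y).2
  refine ⟨fun x => ⟨fun z₁ z₂ h => ?_, fun y => ?_⟩, fun x y z => ?_, ?_, ?_⟩
  · have e : od z₁ x = od z₂ x := by
      apply (σ (od x z₁)).injective
      rw [h2]
      have h' : od x z₁ = od x z₂ := h
      rw [h', h2]
    rw [← h2 z₁ x, ← h2 z₂ x, e]
    exact congrArg _ h
  · refine ⟨σ ((σ y).symm x) y, ?_⟩
    have := h1 y ((σ y).symm x)
    rwa [Equiv.apply_symm_apply] at this
  · obtain ⟨u, hu⟩ : ∃ u, u = od (od x y) (od x z) := ⟨_, rfl⟩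
    obtain ⟨v, hv⟩ : ∃ v, v = od (od x z) (od x y) := ⟨_, rfl⟩
    have huv : σ u v = od x y := by rw [hu, hv, h2]
    have hvu : σ v u = od x z := by rw [hu, hv, h2]
    obtain ⟨w, hw⟩ := (σ u).surjective (od y x)
    have hq : σ v w = od z x := by
      apply (σ (od x z)).injective
      rw [h2, ← hvu, ← hcyc, huv, hw, h2]
    have hz : z = σ (σ w v) (σ w u) := by
      rw [← hcyc, hq, hvu, h2]
    have hy : y = σ (σ w u) (σ w v) := by
      rw [← hcyc, hw, huv, h2]
    have hyz : od y z = σ w u := by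
      rw [hy, hz, h1]
    rw [← hu, hyz, ← hw, h1]
  · intro a b h
    have h' : od a a = od b b := h
    rw [← h2 a a, ← h2 b b, h']
  · intro a
    exact ⟨σ a a, h1 a a⟩
end

section
/- Let (G,X) be a cycle group: G a group acting on a set X equipped with a map + : G×X → G satisfying (πρ) + x = (π + ρ(x))ρ and (π + x) + y = (π + y) + x for all π, ρ ∈ G and x, y ∈ X. Then the binary operation x·y := (1 + x)(y), where 1 ∈ G is the identity element, makes X into a cycle set. -/
/-- If `(G,X)` is a cycle group — a group `G` acting on a set `X` with a map
`+ : G × X → G` satisfying `(πρ) + x = (π + ρ(x))ρ` and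
`(π + x) + y = (π + y) + x` — then `x·y := (1 + x)(y)` makes `X` a cycle set:
the left multiplications are bijective and
`(x·y)·(x·z) = (y·x)·(y·z)` holds. -/
theorem stmt_11 {G X : Type*} [Group G] [MulAction G X]
    (add : G → X → G)
    (h1 : ∀ (π ρ : G) (x : X), add (π * ρ) x = add π (ρ • x) * ρ)
    (h2 : ∀ (π : G) (x y : X), add (add π x) y = add (add π y) x) :
    (∀ x : X, Function.Bijective fun y : X => add 1 x • y) ∧
    (∀ x y z : X,
      add 1 (add 1 x • y) • (add 1 x • z) =
        add 1 (add 1 y • x) • (add 1 y • z)) := by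
  refine ⟨fun x => MulAction.bijective (add 1 x), fun x y z => ?_⟩
  rw [← mul_smul, ← mul_smul, ← h1, ← h1, one_mul, one_mul, h2]
end

section
/- Let A be a linear cycle set. Then A is non-degenerate: the map a ↦ (−a)·a is a two-sided inverse of the map a ↦ a·a. Moreover, for every a ∈ A the left multiplication σ_a satisfies σ_a^{-1} = σ_{−(a·a)}, and the map σ : A → G(A), a ↦ σ_a, is surjective onto the permutation group G(A) (the subgroup of Sym(A) generated by all σ_a): every element of G(A) equals σ_b for some b ∈ A. -/
/-- Let `A` be a linear cycle set (an abelian group with cycle set operation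
`a·b = σ a b` satisfying `a·(b+c) = a·b + a·c` and `(a+b)·c = (a·b)·(a·c)`).
Then `A` is non-degenerate: `a ↦ (−a)·a` is a two-sided inverse of
`a ↦ a·a`; moreover `σ_a⁻¹ = σ_{−(a·a)}` for every `a`, and every element of
the permutation group `G(A)` (the subgroup of `Sym(A)` generated by the
`σ_a`) is of the form `σ_b`. -/
theorem stmt_12 {A : Type*} [AddCommGroup A] (σ : A → A ≃ A)
    (hcyc : ∀ a b c : A, σ (σ a b) (σ a c) = σ (σ b a) (σ b c))
    (hl : ∀ a b c : A, σ a (b + c) = σ a b + σ a c)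
    (hr : ∀ a b c : A, σ (a + b) c = σ (σ a b) (σ a c)) :
    (∀ a : A, σ (-(σ a a)) (σ a a) = a) ∧
    (∀ a : A, σ (σ (-a) a) (σ (-a) a) = a) ∧
    (∀ a b : A, σ (-(σ a a)) (σ a b) = b ∧ σ a (σ (-(σ a a)) b) = b) ∧
    (∀ π : Equiv.Perm A,
      π ∈ Subgroup.closure (Set.range fun a : A => (σ a : Equiv.Perm A)) →
        ∃ b : A, π = σ b) := by
  have h00 : ∀ a, σ a 0 = 0 := fun a => by
    have := hl a 0 0
    simpa using this
  have h0 : ∀ c, σ 0 c = c := fun c => by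
    have := hr 0 0 c
    rw [h00, add_zero] at this
    exact ((σ 0).injective this).symm
  have hneg : ∀ a b, σ a (-b) = -(σ a b) := fun a b => by
    have := hl a (-b) b
    rw [neg_add_cancel, h00] at this
    exact eq_neg_of_add_eq_zero_left this.symm
  have hinv : ∀ a b, σ (-(σ a a)) (σ a b) = b := fun a b => by
    rw [← hneg, ← hr, add_neg_cancel, h0]
  have hinv' : ∀ a b, σ a (σ (-(σ a a)) b) = b := fun a b => by
    apply (σ (-(σ a a))).injective
    rw [hinv]
  refine ⟨fun a => hinv a a, fun a => ?_, fun a b => ⟨hinv a b, hinv' a b⟩, ?_⟩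
  · rw [← hr, neg_add_cancel, h0]
  · intro π hπ
    induction hπ using Subgroup.closure_induction with
    | mem x hx =>
      obtain ⟨a, rfl⟩ := hx
      exact ⟨a, rfl⟩
    | one => exact ⟨0, Equiv.ext fun c => (h0 c).symm⟩
    | mul x y _ _ hx hy =>
      obtain ⟨a, rfl⟩ := hx
      obtain ⟨b, rfl⟩ := hy
      refine ⟨b + (σ b).symm a, Equiv.ext fun c => ?_⟩
      rw [hr, Equiv.apply_symm_apply]
      rfl
    | inv x _ hx =>
      obtain ⟨a, rfl⟩ := hx
      refine ⟨-(σ a a), Equiv.ext fun c => ?_⟩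
      apply (σ a).injective
      rw [hinv']
      exact (σ a).apply_symm_apply c
end

section
/- Let X be a cycle set and define x ~ y iff σ_x = σ_y (equality of left multiplications). Then ~ is a congruence relation for the cycle set operation: if σ_x = σ_{x'} and σ_y = σ_{y'}, then σ_{x·y} = σ_{x'·y'}. -/
/-- In a cycle set `(X,·)` with left multiplications `σ x`, the relation
`x ~ y ↔ σ_x = σ_y` is a congruence: if `σ_x = σ_{x'}` and `σ_y = σ_{y'}`
then `σ_{x·y} = σ_{x'·y'}`. -/
theorem stmt_13 {X : Type*} (σ : X → X ≃ X)
    (hcyc : ∀ x y z : X, σ (σ x y) (σ x z) = σ (σ y x) (σ y z))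
    (x x' y y' : X) (hx : σ x = σ x') (hy : σ y = σ y') :
    σ (σ x y) = σ (σ x' y') := by
  rw [← hx]
  ext w
  obtain ⟨z, rfl⟩ := (σ x).surjective w
  rw [hcyc x y z, hcyc x y' z, hy]
end

section
/- Every finite cycle set is non-degenerate: if (X,·) is a cycle set and X is a finite set, then the map x ↦ x·x is a bijection of X. -/
/-- `cycL σ m y` is the permutation attached to the multiset `m • y`. -/
def cycL {X : Type*} (σ : X → X ≃ X) : ℕ → X → Equiv.Perm X
  | 0, _ => 1
  | m + 1, y => (σ (cycL σ m y y) : Equiv.Perm X) * cycL σ m y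

theorem cycL_comm {X : Type*} (σ : X → X ≃ X)
    (hcyc : ∀ x y z : X, σ (σ x y) (σ x z) = σ (σ y x) (σ y z)) (m : ℕ) (x y z : X) :
    cycL σ m (σ x y) (σ x z) = σ (cycL σ m y x) (cycL σ m y z) := by
  induction m generalizing z with
  | zero => simp [cycL]
  | succ m ih =>
    simp only [cycL, Equiv.Perm.mul_apply]
    rw [ih, ih, hcyc]

theorem cycL_add {X : Type*} (σ : X → X ≃ X) (i j : ℕ) (x z : X) :
    cycL σ (i + j) x z = cycL σ j (cycL σ i x x) (cycL σ i x z) := by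
  induction j generalizing z with
  | zero => simp [cycL]
  | succ j ih =>
    rw [← add_assoc]
    simp only [cycL, Equiv.Perm.mul_apply]
    rw [ih, ih]

/-- Every finite cycle set is non-degenerate: if `X` is finite, the left
multiplications `σ x` are bijective, and the cycle identity holds, then the
map `x ↦ x·x` is a bijection. -/
theorem stmt_14 {X : Type*} [Finite X] (σ : X → X ≃ X)
    (hcyc : ∀ x y z : X, σ (σ x y) (σ x z) = σ (σ y x) (σ y z)) :
    Function.Bijective (fun x : X => σ x x) := by
  let P : Set X := {y | ∃ m : ℕ, ∀ z, cycL σ (m + 1) y z = z}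
  have hmaps : ∀ x, Set.MapsTo (σ x) P P := by
    rintro x y ⟨m, hm⟩
    refine ⟨m, fun z => ?_⟩
    obtain ⟨w, rfl⟩ := (σ x).surjective z
    rw [cycL_comm σ hcyc, hm, hm]
  have hinv : ∀ x y, σ x y ∈ P → y ∈ P := by
    intro x y h
    have h1 := Equiv.Perm.perm_symm_mapsTo_of_mapsTo (σ x) (hmaps x) h
    simpa using h1
  have hL : ∀ i x y, cycL σ i x y ∈ P → y ∈ P := by
    intro i x y
    induction i with
    | zero => simp [cycL]
    | succ i ih =>
      intro h
      exact ih (hinv _ _ h)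
  have hall : ∀ x, x ∈ P := by
    intro x
    have key : ∀ i j, i < j → cycL σ i x = cycL σ j x → x ∈ P := by
      intro i j hij he
      obtain ⟨k, rfl⟩ := Nat.exists_eq_add_of_lt hij
      refine hL i x x ⟨k, fun z => ?_⟩
      obtain ⟨w, rfl⟩ := (cycL σ i x).surjective z
      rw [← cycL_add, ← add_assoc, ← he]
    obtain ⟨i, j, hne, he⟩ := Finite.exists_ne_map_eq_of_infinite (fun i => cycL σ i x)
    rcases lt_or_gt_of_ne hne with h | h
    · exact key i j h he
    · exact key j i h he.symm
  have hs : Function.Surjective (fun x : X => σ x x) := by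
    intro x
    obtain ⟨m, hm⟩ := hall x
    exact ⟨cycL σ m x x, hm x⟩
  exact ⟨Finite.injective_iff_surjective.mpr hs, hs⟩
end

section
/- Let (A,+) be an abelian group and · a binary operation on A such that every left multiplication σ_a : b ↦ a·b is a bijection; write a^b = σ_b^{-1}(a) and a∘b = a^b + b. Then (A,+,·) is a linear cycle set if and only if (a+b)^c = a^c + b^c and (a^b)^c = a^{b∘c} hold for all a, b, c ∈ A. -/
/-- Let `(A,+)` be an abelian group with a binary operation whose left
multiplications `σ a` are bijections, and write `a^b = σ_b⁻¹(a)` and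
`a∘b = a^b + b`. Then `(A,+,·)` is a linear cycle set iff
`(a+b)^c = a^c + b^c` and `(a^b)^c = a^{b∘c}` for all `a, b, c`. -/
theorem stmt_15 {A : Type*} [AddCommGroup A] (σ : A → A ≃ A) :
    ((∀ a b c : A, σ (σ a b) (σ a c) = σ (σ b a) (σ b c)) ∧
     (∀ a b c : A, σ a (b + c) = σ a b + σ a c) ∧
     (∀ a b c : A, σ (a + b) c = σ (σ a b) (σ a c))) ↔
    ((∀ a b c : A, (σ c).symm (a + b) = (σ c).symm a + (σ c).symm b) ∧
     (∀ a b c : A,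
        (σ c).symm ((σ b).symm a) = (σ ((σ c).symm b + c)).symm a)) := by
  constructor
  · rintro ⟨-, h2, h3⟩
    refine ⟨fun a b c => ?_, fun a b c => ?_⟩
    · rw [Equiv.symm_apply_eq, h2, Equiv.apply_symm_apply, Equiv.apply_symm_apply]
    · symm
      rw [Equiv.symm_apply_eq, add_comm, h3, Equiv.apply_symm_apply, Equiv.apply_symm_apply,
        Equiv.apply_symm_apply]
  · rintro ⟨h1, h2⟩
    have h3 : ∀ a b c : A, σ (a + b) c = σ (σ a b) (σ a c) := by
      intro a b c
      have h := h2 (σ (σ a b) (σ a c)) (σ a b) a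
      rw [Equiv.symm_apply_apply, Equiv.symm_apply_apply, Equiv.symm_apply_apply,
        Equiv.eq_symm_apply, add_comm] at h
      exact h
    refine ⟨fun a b c => ?_, fun a b c => ?_, h3⟩
    · rw [← h3, ← h3, add_comm]
    · rw [← Equiv.eq_symm_apply, h1, Equiv.symm_apply_apply, Equiv.symm_apply_apply]
end

section
/- Let (A,+,·) be a linear cycle set and define the adjoint multiplication a∘b = a^b + b, where a^b = σ_b^{-1}(a). Then (A,+,∘) is a right brace: (A,∘) is a group with identity 0 in which the inverse of a is −(a·a), and (a+b)∘c + c = a∘c + b∘c for all a, b, c ∈ A. -/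
/-- The adjoint multiplication `a∘b = a^b + b` of a linear cycle set with
left multiplications `σ`, where `a^b = σ_b⁻¹(a)`. -/
def circAdj {A : Type*} [AddCommGroup A] (σ : A → A ≃ A) (a b : A) : A :=
  (σ b).symm a + b

/-- If `(A,+,·)` is a linear cycle set, then `(A,+,∘)` with the adjoint
multiplication `a∘b = a^b + b` is a right brace: `∘` is associative with
identity `0`, the `∘`-inverse of `a` is `−(a·a)`, and
`(a+b)∘c + c = a∘c + b∘c`. -/
theorem stmt_16 {A : Type*} [AddCommGroup A] (σ : A → A ≃ A)
    (hcyc : ∀ a b c : A, σ (σ a b) (σ a c) = σ (σ b a) (σ b c))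
    (hl : ∀ a b c : A, σ a (b + c) = σ a b + σ a c)
    (hr : ∀ a b c : A, σ (a + b) c = σ (σ a b) (σ a c)) :
    (∀ a b c : A, circAdj σ (circAdj σ a b) c = circAdj σ a (circAdj σ b c)) ∧
    (∀ a : A, circAdj σ a 0 = a ∧ circAdj σ 0 a = a) ∧
    (∀ a : A, circAdj σ a (-(σ a a)) = 0 ∧ circAdj σ (-(σ a a)) a = 0) ∧
    (∀ a b c : A,
      circAdj σ (a + b) c + c = circAdj σ a c + circAdj σ b c) := by
  have h0 : ∀ a, σ a 0 = 0 := fun a => by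
    have h := hl a 0 0
    rw [add_zero] at h
    exact left_eq_add.mp h
  have hz : ∀ c, σ 0 c = c := fun c => by
    have h := hr 0 0 c
    rw [add_zero, h0] at h
    exact ((σ 0).injective h).symm
  have hs : ∀ c a b, (σ c).symm (a + b) = (σ c).symm a + (σ c).symm b := fun c a b => by
    rw [Equiv.symm_apply_eq, hl, Equiv.apply_symm_apply, Equiv.apply_symm_apply]
  have hn : ∀ a b, σ a (-b) = -σ a b := fun a b => by
    have h := hl a (-b) b
    rw [neg_add_cancel, h0] at h
    exact eq_neg_of_add_eq_zero_left h.symm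
  have hc : ∀ a b c, (σ ((σ c).symm b + c)).symm a = (σ c).symm ((σ b).symm a) :=
    fun a b c => by
      rw [Equiv.symm_apply_eq, add_comm, hr]
      simp only [Equiv.apply_symm_apply]
  unfold circAdj
  refine ⟨fun a b c => ?_, fun a => ⟨?_, ?_⟩, fun a => ⟨?_, ?_⟩, fun a b c => ?_⟩
  · rw [hc, hs, add_assoc]
  · rw [add_zero, Equiv.symm_apply_eq, hz]
  · rw [(Equiv.symm_apply_eq _).mpr (h0 a).symm, zero_add]
  · have h := hr a (-a) a
    rw [add_neg_cancel, hz, hn] at h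
    rw [(Equiv.symm_apply_eq _).mpr h, add_neg_cancel]
  · rw [← hn, Equiv.symm_apply_apply, neg_add_cancel]
  · rw [hs]
    abel
end

section
/- Let X be a finite cycle set with |X| > 1 whose permutation group G(X) (the subgroup of Sym(X) generated by the left multiplications σ_x) is abelian and acts transitively on X (i.e., X is indecomposable). Then X is retractable: there exist distinct elements x, y ∈ X with σ_x = σ_y. -/
/-- Abstract nilpotency argument: a finite commutative radical ring has a nonzero annihilator. -/
theorem aux_ring {T : Type*} [AddCommGroup T] [Finite T] [Nontrivial T] (c : T → T →+ T)
    (hinj : ∀ a b, c a b = 0 → b = 0)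
    (hcomm : ∀ a b t, c a (c b t) = c b (c a t))
    (key : ∀ a b, c a b + a = c b a + b) :
    ∃ z, z ≠ 0 ∧ ∀ a, c a z = z := by
  classical
  have key' : ∀ a b, c a b - b = c b a - a := fun a b => by
    rw [sub_eq_sub_iff_add_eq_add, key]
  obtain ⟨z0, hz0⟩ := exists_ne (0 : T)
  obtain ⟨z, hz, hmin⟩ := Set.exists_min_image {z : T | z ≠ 0}
    (fun z => (Set.range fun a => c a z - z).ncard) (Set.toFinite _) ⟨z0, hz0⟩
  refine ⟨z, hz, fun a => ?_⟩
  by_contra hne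
  have hw : c a z - z ≠ 0 := sub_ne_zero.mpr hne
  obtain ⟨w, hwdef⟩ : ∃ w, w = c a z - z := ⟨_, rfl⟩
  rw [← hwdef] at hw
  have hsub : (Set.range fun b => c b w - w) ⊆ Set.range fun b => c b z - z := by
    rintro _ ⟨b, rfl⟩
    refine ⟨c a b - b, ?_⟩
    simp only
    rw [key' (c a b - b) z, hwdef, map_sub, map_sub, hcomm b a z]
    have h1 := key' b z
    have h2 : c b z = c z b - b + z := by rw [← h1]; abel
    simp only [map_sub, map_add, h2, hcomm z a b]
    abel
  have heq := Set.eq_of_subset_of_ncard_le hsub (hmin w hw) (Set.toFinite _)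
  have hmem : -w ∈ Set.range fun b => c b z - z := by
    refine ⟨-a, ?_⟩
    simp only
    rw [key' (-a) z, hwdef, key' a z, map_neg]
    abel
  rw [← heq] at hmem
  obtain ⟨b, hb⟩ := hmem
  apply hw
  apply hinj b
  simp only at hb
  rw [sub_eq_iff_eq_add] at hb
  rw [hb]; abel

/-- Two commuting-with-`G` permutations which agree at a point agree, if `G` is transitive. -/
theorem aux_eq {X : Type*} (G : Subgroup (Equiv.Perm X))
    (htr : ∀ x y : X, ∃ g ∈ G, g x = y) (a b : Equiv.Perm X)
    (ha : ∀ g ∈ G, a * g = g * a) (hb : ∀ g ∈ G, b * g = g * b) (o : X) (h : a o = b o) :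
    a = b := by
  ext x
  obtain ⟨g, hg, rfl⟩ := htr o x
  have h1 := congrArg (fun p : Equiv.Perm X => p o) (ha g hg)
  have h2 := congrArg (fun p : Equiv.Perm X => p o) (hb g hg)
  simp only [Equiv.Perm.mul_apply] at h1 h2
  rw [h1, h2, h]

/-- Two abelian transitive groups, one normalizing the other, share a nontrivial element. -/
theorem aux_group {X : Type*} [Finite X] [Nontrivial X] (G T : Subgroup (Equiv.Perm X))
    (hG : ∀ a ∈ G, ∀ b ∈ G, a * b = b * a) (hT : ∀ a ∈ T, ∀ b ∈ T, a * b = b * a)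
    (htG : ∀ x y : X, ∃ g ∈ G, g x = y) (htT : ∀ x y : X, ∃ g ∈ T, g x = y)
    (hn : ∀ g ∈ G, ∀ t ∈ T, g * t * g⁻¹ ∈ T) :
    ∃ z, z ≠ 1 ∧ z ∈ G ∧ z ∈ T := by
  classical
  obtain ⟨o, o', hoo⟩ := exists_pair_ne X
  have eT : ∀ a ∈ T, ∀ b ∈ T, a o = b o → a = b := fun a ha b hb h =>
    aux_eq T htT a b (fun g hg => hT a ha g hg) (fun g hg => hT b hb g hg) o h
  let _i : CommGroup T :=
    { (inferInstance : Group T) with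
      mul_comm := fun a b => Subtype.ext (hT a a.2 b b.2) }
  have hnt : Nontrivial (Additive T) := by
    obtain ⟨t, ht, hto⟩ := htT o o'
    refine ⟨Additive.ofMul (1 : T), Additive.ofMul ⟨t, ht⟩, fun h => hoo ?_⟩
    have h' : (1 : Equiv.Perm X) = t := congrArg Subtype.val (Additive.ofMul.injective h)
    rw [← hto, ← h']; rfl
  have hfin : Finite (Additive T) := inferInstanceAs (Finite T)
  choose γ hγ hγo using fun y => htG o y
  let c : Additive T → Additive T →+ Additive T := fun a =>
    AddMonoidHom.mk' (fun b => Additive.ofMul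
      (⟨γ (a.toMul.1 o) * b.toMul.1 * (γ (a.toMul.1 o))⁻¹,
        hn _ (hγ _) _ b.toMul.2⟩ : T)) (by
      intro b d
      apply Additive.toMul.injective
      apply Subtype.ext
      change _ * (b.toMul.1 * d.toMul.1) * _ = (_ * _ * _) * (_ * _ * _)
      group)
  have hc : ∀ a b : Additive T, (c a b).toMul.1 =
    γ (a.toMul.1 o) * b.toMul.1 * (γ (a.toMul.1 o))⁻¹ := fun a b => rfl
  obtain ⟨z, hz, hfix⟩ := aux_ring c (by
      intro a b h
      have h1 : (c a b).toMul.1 = 1 := by rw [h]; rfl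
      rw [hc] at h1
      apply Additive.toMul.injective
      apply Subtype.ext
      change b.toMul.1 = 1
      simpa using h1) (by
      intro a b t
      apply Additive.toMul.injective
      apply Subtype.ext
      rw [hc, hc, hc, hc]
      have := hG _ (hγ (a.toMul.1 o)) _ (hγ (b.toMul.1 o))
      have e : ∀ p q r : Equiv.Perm X, p * (q * r * q⁻¹) * p⁻¹ = (p * q) * r * (p * q)⁻¹ := by
        intros; group
      rw [e, e, this]) (by
      intro a b
      apply Additive.toMul.injective
      apply Subtype.ext
      apply eT _ (Subtype.property _) _ (Subtype.property _)
      have h3 := congrArg (fun p : Equiv.Perm X => p o)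
        (hG _ (hγ (a.toMul.1 o)) _ (hγ (b.toMul.1 o)))
      change ((c a b).toMul.1 * a.toMul.1) o = ((c b a).toMul.1 * b.toMul.1) o
      have e : ∀ p : Equiv.Perm X, ∀ x y, p x = y → p⁻¹ y = x := by
        rintro p x y rfl
        simp
      rw [hc, hc]
      simp only [Equiv.Perm.mul_apply] at h3 ⊢
      rw [e _ o _ (hγo _), e _ o _ (hγo _)]
      rw [hγo, hγo] at h3
      exact h3)
  have hz1 : z.toMul.1 ≠ 1 := fun h => hz (by
    apply Additive.toMul.injective
    apply Subtype.ext
    exact h)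
  have hcG : ∀ g ∈ G, z.toMul.1 * g = g * z.toMul.1 := by
    intro g hg
    obtain ⟨t, ht, hto⟩ := htT o (g o)
    have hgg : γ (g o) = g := aux_eq G htG _ _ (fun k hk => hG _ (hγ _) _ hk)
      (fun k hk => hG _ hg _ hk) o (hγo _)
    have h1 := congrArg (fun q : Additive T => q.toMul.1) (hfix (Additive.ofMul ⟨t, ht⟩))
    simp only [hc, toMul_ofMul, hto, hgg] at h1
    rw [mul_inv_eq_iff_eq_mul] at h1
    exact h1.symm
  refine ⟨z.toMul.1, hz1, ?_, z.toMul.2⟩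
  rw [aux_eq G htG z.toMul.1 (γ (z.toMul.1 o)) hcG (fun k hk => hG _ (hγ _) _ hk) o (hγo _).symm]
  exact hγ _

/-- Let `X` be a finite cycle set with more than one element whose
permutation group `G(X)` (the subgroup of `Sym(X)` generated by the left
multiplications `σ x`) is abelian and acts transitively on `X` (i.e. `X` is
indecomposable). Then `X` is retractable: there are distinct `x, y` with
`σ_x = σ_y`. -/
theorem stmt_19 {X : Type*} [Finite X] (σ : X → X ≃ X)
    (hcyc : ∀ x y z : X, σ (σ x y) (σ x z) = σ (σ y x) (σ y z))
    (hcard : 1 < Nat.card X)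
    (habel : ∀ π ρ : Equiv.Perm X,
      π ∈ Subgroup.closure (Set.range fun x : X => (σ x : Equiv.Perm X)) →
      ρ ∈ Subgroup.closure (Set.range fun x : X => (σ x : Equiv.Perm X)) →
      π * ρ = ρ * π)
    (htrans : ∀ x y : X,
      ∃ π ∈ Subgroup.closure (Set.range fun x : X => (σ x : Equiv.Perm X)),
        π x = y) :
    ∃ x y : X, x ≠ y ∧ σ x = σ y := by
  classical
  by_contra hcon
  have : Nontrivial X := Finite.one_lt_card_iff_nontrivial.mp hcard
  obtain ⟨G, hGdef⟩ : ∃ G, G = Subgroup.closure (Set.range fun x : X => (σ x : Equiv.Perm X)) :=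
    ⟨_, rfl⟩
  rw [← hGdef] at habel htrans
  have hσ : ∀ x, (σ x : Equiv.Perm X) ∈ G := fun x => by
    rw [hGdef]; exact Subgroup.subset_closure ⟨x, rfl⟩
  have hap : ∀ g ∈ G, ∀ x y, g (σ x y) = σ x (g y) := fun g hg x y =>
    congrArg (fun p : Equiv.Perm X => p y) (habel g (σ x) hg (hσ x))
  have hinv : ∀ S : Set X, S.Nonempty → (∀ y, ∀ x ∈ S, σ y x ∈ S) → ∀ x, x ∈ S := by
    rintro S ⟨s, hs⟩ hS x
    have : ∀ π ∈ G, ∀ x, x ∈ S ↔ π x ∈ S := by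
      intro π hπ
      rw [hGdef] at hπ
      induction hπ using Subgroup.closure_induction with
      | mem p hp =>
        obtain ⟨y, rfl⟩ := hp
        have hb : Set.image (σ y) S = S := by
          apply Set.eq_of_subset_of_ncard_le _ _ (Set.toFinite _)
          · rintro _ ⟨x, hx, rfl⟩
            exact hS y x hx
          · rw [Set.ncard_image_of_injective _ (σ y).injective]
        intro x
        refine ⟨hS y x, fun h => ?_⟩
        rw [← hb] at h
        exact ((σ y).injective.mem_set_image).mp h
      | one => intro x; rfl
      | mul p q _ _ hp hq => intro x; rw [Equiv.Perm.mul_apply, ← hp, ← hq]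
      | inv p _ hp => intro x; rw [hp (p⁻¹ x)]; simp
    obtain ⟨π, hπ, rfl⟩ := htrans s x
    exact (this π hπ s).mp hs
  -- the maps generating the second group
  let τ : Equiv.Perm X → X → X := fun g x => σ (g x) x
  have hτcomm : ∀ g ∈ G, ∀ h ∈ G, ∀ x, τ g (τ h x) = τ h (τ g x) := by
    intro g hg h hh x
    simp only [τ]
    rw [hap g hg, hap h hh, hcyc]
  have hinvτ : ∀ S : Set X, S.Nonempty → (∀ g ∈ G, ∀ x ∈ S, τ g x ∈ S) → ∀ x, x ∈ S := by
    intro S hS hS2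
    apply hinv S hS
    intro y x hx
    obtain ⟨g, hg, rfl⟩ := htrans x y
    exact hS2 g hg x hx
  have hbij : ∀ g ∈ G, Function.Bijective (τ g) := by
    intro g hg
    rw [← Finite.surjective_iff_bijective]
    refine hinvτ (Set.range (τ g)) (Set.range_nonempty _) ?_
    rintro h hh _ ⟨x, rfl⟩
    exact ⟨τ h x, hτcomm g hg h hh x⟩
  let P : G → Equiv.Perm X := fun g => Equiv.ofBijective (τ g) (hbij g g.2)
  have hP : ∀ g x, P g x = σ (g.1 x) x := fun g x => rfl
  let T := Subgroup.closure (Set.range P)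
  have hPT : ∀ g, P g ∈ T := fun g => Subgroup.subset_closure ⟨g, rfl⟩
  have hT : ∀ a ∈ T, ∀ b ∈ T, a * b = b * a := by
    have hle := Subgroup.closure_le_centralizer_centralizer (Set.range P)
    have h2 : T ≤ Subgroup.centralizer (Set.range P) := by
      rw [Subgroup.closure_le]
      rintro _ ⟨g, rfl⟩
      rw [SetLike.mem_coe, Subgroup.mem_centralizer_iff]
      rintro _ ⟨h, rfl⟩
      ext x
      exact hτcomm h h.2 g g.2 x
    intro a ha b hb
    exact (Subgroup.mem_centralizer_iff.mp (hle hb) a (h2 ha))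
  have htT : ∀ x y : X, ∃ g ∈ T, g x = y := by
    intro x
    refine hinvτ {y | ∃ g ∈ T, g x = y} ⟨x, 1, T.one_mem, rfl⟩ ?_
    rintro g hg _ ⟨t, ht, rfl⟩
    exact ⟨P ⟨g, hg⟩ * t, T.mul_mem (hPT _) ht, rfl⟩
  have hn : ∀ g ∈ G, ∀ t ∈ T, g * t * g⁻¹ ∈ T := by
    intro g hg t ht
    induction ht using Subgroup.closure_induction with
    | mem p hp =>
      obtain ⟨h, rfl⟩ := hp
      have : g * P h * g⁻¹ = P ⟨h.1 * g⁻¹, G.mul_mem h.2 (G.inv_mem hg)⟩ := by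
        ext x
        simp only [Equiv.Perm.mul_apply, hP]
        rw [hap g hg]
        simp
      rw [this]; exact hPT _
    | one => simp
    | mul p q _ _ hp hq =>
      have : g * (p * q) * g⁻¹ = (g * p * g⁻¹) * (g * q * g⁻¹) := by group
      rw [this]; exact T.mul_mem hp hq
    | inv p _ hp =>
      have : g * p⁻¹ * g⁻¹ = (g * p * g⁻¹)⁻¹ := by group
      rw [this]; exact T.inv_mem hp
  obtain ⟨z, hz1, hzG, hzT⟩ := aux_group G T (fun a ha b hb => habel a b ha hb) hT htrans htT hn
  apply hcon
  obtain ⟨x, hx⟩ : ∃ x, z x ≠ x := by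
    by_contra! h
    exact hz1 (Equiv.ext h)
  refine ⟨z x, x, hx, ?_⟩
  apply aux_eq G htrans _ _ (fun k hk => habel _ k (hσ _) hk)
    (fun k hk => habel _ k (hσ _) hk) (z x)
  have h1 := congrArg (fun p : Equiv.Perm X => p x) (hT _ (hPT 1) z hzT)
  simp only [Equiv.Perm.mul_apply, hP] at h1
  rw [hap z hzG] at h1
  exact h1
end
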